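/- arXiv:2603.19401 — 2 statements merged into one kernel-verified Lean document; each statement's English description precedes it below -/
import Mathlib

section
/- The characteristic polynomial of A₄(2), namely x⁴ − x³ − 2x + 1, is irreducible over ℚ and the Galois group over ℚ of its splitting field is isomorphic to the symmetric group S₄ on four elements. -/
open Polynomial

/-- The matrix `A₄(k)` (over `ℚ`) with rows `(0,0,k,k−1)`, `(1,0,0,0)`, `(0,1,0,0)`,
`(0,0,1,1)`; its characteristic polynomial is `x⁴ − x³ − kx + 1`. -/
def A4 (k : ℤ) : Matrix (Fin 4) (Fin 4) ℚ :=
  !![0, 0, (k : ℚ), (k : ℚ) - 1; 1, 0, 0, 0; 0, 1, 0, 0; 0, 0, 1, 1]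

theorem quartic_ext {R : Type*} [CommRing R] {a b c d a' b' c' d' : R}
    (h : X ^ 4 + C a * X ^ 3 + C b * X ^ 2 + C c * X + C d
      = X ^ 4 + C a' * X ^ 3 + C b' * X ^ 2 + C c' * X + C d') :
    a = a' ∧ b = b' ∧ c = c' ∧ d = d' := by
  have h0 := congrArg (fun p => coeff p 0) h
  have h1 := congrArg (fun p => coeff p 1) h
  have h2 := congrArg (fun p => coeff p 2) h
  have h3 := congrArg (fun p => coeff p 3) h
  simp [coeff_X, coeff_C, coeff_X_pow] at h0 h1 h2 h3
  exact ⟨h3, h2, h1, h0⟩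

theorem quartic_irreducible_int : Irreducible (X ^ 4 - X ^ 3 - C (2 : ℤ) * X + 1 : ℤ[X]) := by
  have hm : (X ^ 4 - X ^ 3 - C (2 : ℤ) * X + 1 : ℤ[X]).Monic := by monicity!
  have hd : (X ^ 4 - X ^ 3 - C (2 : ℤ) * X + 1 : ℤ[X]).natDegree = 4 := by compute_degree!
  rw [hm.irreducible_iff_natDegree']
  refine ⟨fun h => by rw [h] at hd; simp at hd, ?_⟩
  intro f g hf hg hfg hmem
  rw [hd, Finset.mem_Ioc] at hmem
  have hdeg : f.natDegree + g.natDegree = 4 := by rw [← hf.natDegree_mul hg, hfg, hd]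
  have hcase : g.natDegree = 1 ∨ g.natDegree = 2 := by omega
  rcases hcase with h1 | h2
  · obtain ⟨r, rfl⟩ := isMonicOfDegree_one_iff.mp ⟨h1, hg⟩
    have h := congrArg (eval (-r)) hfg
    simp at h
    have hu : r * (-(r ^ 3 + r ^ 2 + 2)) = 1 := by linarith
    rcases Int.isUnit_iff.mp (IsUnit.of_mul_eq_one _ hu) with rfl | rfl <;> norm_num at hu
  · obtain ⟨a, b, rfl⟩ := isMonicOfDegree_two_iff.mp ⟨h2, hg⟩
    obtain ⟨c, d, rfl⟩ := isMonicOfDegree_two_iff.mp ⟨(by omega : f.natDegree = 2), hf⟩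
    have h : X ^ 4 + C (a + c) * X ^ 3 + C (b + d + a * c) * X ^ 2 + C (a * d + b * c) * X
        + C (b * d) = X ^ 4 + C (-1 : ℤ) * X ^ 3 + C 0 * X ^ 2 + C (-2) * X + C 1 := by
      simp only [map_add, map_mul, map_neg, map_one, map_zero] at hfg ⊢
      linear_combination hfg
    obtain ⟨e1, e2, e3, e4⟩ := quartic_ext h
    rcases Int.isUnit_iff.mp (IsUnit.of_mul_eq_one _ e4) with rfl | rfl
    · obtain rfl : d = 1 := by linarith
      omega
    · obtain rfl : d = -1 := by linarith
      omega

theorem quartic_irreducible : Irreducible (X ^ 4 - X ^ 3 - C (2 : ℚ) * X + 1 : ℚ[X]) := by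
  have hm : (X ^ 4 - X ^ 3 - C (2 : ℤ) * X + 1 : ℤ[X]).Monic := by monicity!
  have := (hm.irreducible_iff_irreducible_map_fraction_map (K := ℚ)).mp quartic_irreducible_int
  convert this using 1
  simp
  rfl

theorem cubic_irreducible : Irreducible (X ^ 3 - C (2 : ℚ) * X - C 5 : ℚ[X]) := by
  have hd : (X ^ 3 - C (2 : ℚ) * X - C 5 : ℚ[X]).natDegree = 3 := by compute_degree!
  apply irreducible_of_degree_le_three_of_not_isRoot
  · rw [hd]; simp
  intro x hx
  have hm : (X ^ 3 - C (2 : ℤ) * X - C 5 : ℤ[X]).Monic := by monicity!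
  have hx' : x ^ 3 - 2 * x - 5 = 0 := by simpa using hx
  obtain ⟨n, rfl⟩ := isInteger_of_is_root_of_monic hm (r := x) (by
    simp only [map_sub, map_mul, map_pow, aeval_X, map_ofNat]
    exact hx')
  simp only [eq_intCast] at hx'
  have hn : n ^ 3 - 2 * n - 5 = 0 := by exact_mod_cast hx'
  rcases lt_or_ge n 3 with h | h
  · rcases lt_or_ge n 2 with h' | h'
    · rcases lt_or_ge n (-2) with h'' | h''
      · nlinarith [mul_pos (sub_pos.mpr h'') (sub_pos.mpr h''), sq_nonneg n]
      · interval_cases n <;> norm_num at hn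
    · interval_cases n; norm_num at hn
  · nlinarith [sq_nonneg n, sq_nonneg (n - 3)]

theorem quartic_vieta {K : Type*} [Field K] [Algebra ℚ K]
    (hs : ((X ^ 4 - X ^ 3 - C (2 : ℚ) * X + 1 : ℚ[X]).map (algebraMap ℚ K)).Splits) :
    ∃ a b c d : K, a + b + c + d = 1 ∧ a * b + a * c + a * d + b * c + b * d + c * d = 0 ∧
      a * b * c + a * b * d + a * c * d + b * c * d = 2 ∧ a * b * c * d = 1 := by
  have hm : (X ^ 4 - X ^ 3 - C (2 : ℚ) * X + 1 : ℚ[X]).Monic := by monicity!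
  have hd : (X ^ 4 - X ^ 3 - C (2 : ℚ) * X + 1 : ℚ[X]).natDegree = 4 := by compute_degree!
  have hc := hs.natDegree_eq_card_roots
  rw [hm.natDegree_map, hd] at hc
  obtain ⟨a, b, c, d, hr⟩ := Multiset.card_eq_four.mp hc.symm
  have hp := hs.eq_prod_roots_of_monic (hm.map _)
  rw [hr] at hp
  simp at hp
  have h : X ^ 4 + C (-(a + b + c + d)) * X ^ 3
        + C (a * b + a * c + a * d + b * c + b * d + c * d) * X ^ 2
        + C (-(a * b * c + a * b * d + a * c * d + b * c * d)) * X
        + C (a * b * c * d) = X ^ 4 + C (-1 : K) * X ^ 3 + C 0 * X ^ 2 + C (-2) * X + C 1 := by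
      simp only [map_add, map_mul, map_neg, map_one, map_zero, map_ofNat] at hp ⊢
      linear_combination -hp
  obtain ⟨e1, e2, e3, e4⟩ := quartic_ext h
  exact ⟨a, b, c, d, neg_injective e1, e2, neg_injective e3, e4⟩

theorem twelve_dvd_card : 12 ∣ Nat.card (X ^ 4 - X ^ 3 - C (2 : ℚ) * X + 1 : ℚ[X]).Gal := by
  have hd : (X ^ 4 - X ^ 3 - C (2 : ℚ) * X + 1 : ℚ[X]).natDegree = 4 := by compute_degree!
  have hd3 : (X ^ 3 - C (2 : ℚ) * X - C 5 : ℚ[X]).natDegree = 3 := by compute_degree!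
  rw [Gal.card_of_separable quartic_irreducible.separable]
  have hs := SplittingField.splits (X ^ 4 - X ^ 3 - C (2 : ℚ) * X + 1 : ℚ[X])
  have h4 := quartic_irreducible.natDegree_dvd_finrank hs
  rw [hd] at h4
  obtain ⟨a, b, c, d, e1, e2, e3, e4⟩ := quartic_vieta hs
  have hy : aeval (a * b + c * d) (X ^ 3 - C (2 : ℚ) * X - C 5 : ℚ[X]) = 0 := by
    simp only [map_sub, map_mul, map_pow, aeval_X, map_ofNat]
    have id : (a * b + c * d) ^ 3
        - (a * b + a * c + a * d + b * c + b * d + c * d) * (a * b + c * d) ^ 2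
        + ((a + b + c + d) * (a * b * c + a * b * d + a * c * d + b * c * d)
          - 4 * (a * b * c * d)) * (a * b + c * d)
        - ((a + b + c + d) ^ 2 * (a * b * c * d)
          + (a * b * c + a * b * d + a * c * d + b * c * d) ^ 2
          - 4 * (a * b + a * c + a * d + b * c + b * d + c * d) * (a * b * c * d)) = 0 := by
      ring
    rw [e1, e2, e3, e4] at id
    linear_combination id
  have hm3 : (X ^ 3 - C (2 : ℚ) * X - C 5 : ℚ[X]).Monic := by monicity!
  have h3 : 3 ∣ Module.finrank ℚ (X ^ 4 - X ^ 3 - C (2 : ℚ) * X + 1 : ℚ[X]).SplittingField := by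
    have := minpoly.degree_dvd (K := ℚ) (x := a * b + c * d) (.of_finite ℚ _)
    rwa [← minpoly.eq_of_irreducible_of_monic cubic_irreducible hy hm3, hd3] at this
  omega

theorem quartic_real_card :
    2 ≤ Fintype.card ((X ^ 4 - X ^ 3 - C (2 : ℚ) * X + 1 : ℚ[X]).rootSet ℝ) ∧
    Fintype.card ((X ^ 4 - X ^ 3 - C (2 : ℚ) * X + 1 : ℚ[X]).rootSet ℝ) < 4 := by
  have hm : (X ^ 4 - X ^ 3 - C (2 : ℚ) * X + 1 : ℚ[X]).Monic := by monicity!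
  have hd : (X ^ 4 - X ^ 3 - C (2 : ℚ) * X + 1 : ℚ[X]).natDegree = 4 := by compute_degree!
  have hmem : ∀ x : ℝ, x ∈ (X ^ 4 - X ^ 3 - C (2 : ℚ) * X + 1 : ℚ[X]).rootSet ℝ ↔
      x ^ 4 - x ^ 3 - 2 * x + 1 = 0 := by
    intro x
    rw [mem_rootSet_of_ne hm.ne_zero]
    simp
  constructor
  · have hc : Continuous (fun x : ℝ => x ^ 4 - x ^ 3 - 2 * x + 1) := by fun_prop
    obtain ⟨r, hr, hr0⟩ := intermediate_value_Icc' (zero_le_one (α := ℝ)) hc.continuousOn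
      (show (0 : ℝ) ∈ Set.Icc _ _ by norm_num)
    obtain ⟨s, hs, hs0⟩ := intermediate_value_Icc (one_le_two (α := ℝ)) hc.continuousOn
      (show (0 : ℝ) ∈ Set.Icc _ _ by norm_num)
    have hrs : r ≠ s := by
      rintro rfl
      obtain rfl : r = 1 := le_antisymm hr.2 hs.1
      norm_num at hr0
    have : 1 < Fintype.card ((X ^ 4 - X ^ 3 - C (2 : ℚ) * X + 1 : ℚ[X]).rootSet ℝ) :=
      Fintype.one_lt_card_iff.mpr ⟨⟨r, (hmem r).2 hr0⟩, ⟨s, (hmem s).2 hs0⟩,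
        fun h => hrs (congrArg Subtype.val h)⟩
    exact this
  · by_contra! hcon
    have hs : ((X ^ 4 - X ^ 3 - C (2 : ℚ) * X + 1 : ℚ[X]).map (algebraMap ℚ ℝ)).Splits := by
      rw [splits_iff_card_roots]
      apply le_antisymm (card_roots' _)
      rw [hm.natDegree_map, hd]
      refine hcon.trans ?_
      classical
      simp_rw [rootSet_def, Finset.coe_sort_coe, Fintype.card_coe]
      exact Multiset.toFinset_card_le _
    obtain ⟨a, b, c, d, e1, e2, e3, e4⟩ := quartic_vieta hs
    have pos : ∀ x : ℝ, (x - a) * (x - b) * (x - c) * (x - d) = 0 → 0 < x := by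
      intro x hx
      have : x ^ 4 - x ^ 3 - 2 * x + 1 = 0 := by
        linear_combination hx + x ^ 3 * e1 - x ^ 2 * e2 + x * e3 - e4
      by_contra! h
      nlinarith [sq_nonneg x, sq_nonneg (x ^ 2), mul_nonneg (sq_nonneg x) (neg_nonneg.mpr h)]
    have ha := pos a (by ring)
    have hb := pos b (by ring)
    have hc := pos c (by ring)
    have hd := pos d (by ring)
    have : 0 < a * b + a * c + a * d + b * c + b * d + c * d := by positivity
    linarith

theorem quartic_gal :
    Nonempty ((X ^ 4 - X ^ 3 - C (2 : ℚ) * X + 1 : ℚ[X]).Gal ≃* Equiv.Perm (Fin 4)) := by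
  have hd : (X ^ 4 - X ^ 3 - C (2 : ℚ) * X + 1 : ℚ[X]).natDegree = 4 := by compute_degree!
  have hirr := quartic_irreducible
  have h12 := twelve_dvd_card
  have hreal := quartic_real_card
  generalize (X ^ 4 - X ^ 3 - C (2 : ℚ) * X + 1 : ℚ[X]) = p at *
  classical
  have : Fact ((p.map (algebraMap ℚ ℂ)).Splits) := ⟨IsAlgClosed.splits _⟩
  have hcard : Fintype.card (p.rootSet ℂ) = 4 := by
    rw [card_rootSet_eq_natDegree hirr.separable (IsAlgClosed.splits _), hd]
  have key := Gal.card_complex_roots_eq_card_real_add_card_not_gal_inv p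
  simp_rw [Set.toFinset_card] at key
  rw [hcard] at key
  set σ := Gal.galActionHom p ℂ (Gal.restrict p ℂ
        (AlgEquiv.restrictScalars ℚ Complex.conjAe)) with hσ
  have hswap : σ.IsSwap := by
    rw [← Equiv.Perm.card_support_eq_two]
    have := Equiv.Perm.card_support_ne_one σ
    omega
  have hinj := Gal.galActionHom_injective p ℂ
  have hrange : Nat.card (Gal.galActionHom p ℂ).range = Nat.card p.Gal :=
    (Nat.card_congr (MonoidHom.ofInjective hinj).toEquiv).symm
  have hidx := (Gal.galActionHom p ℂ).range.card_mul_index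
  rw [hrange, Nat.card_perm, Nat.card_eq_fintype_card (α := p.rootSet ℂ), hcard] at hidx
  have htop : (Gal.galActionHom p ℂ).range = ⊤ := by
    obtain ⟨k, hk⟩ := h12
    rw [hk, mul_assoc] at hidx
    have h2 : k * (Gal.galActionHom p ℂ).range.index = 2 := by
      have : Nat.factorial 4 = 24 := rfl
      omega
    have hdv : (Gal.galActionHom p ℂ).range.index ∣ 2 := ⟨k, by rw [mul_comm, h2]⟩
    rcases (Nat.dvd_prime Nat.prime_two).mp hdv with h | h
    · exact Subgroup.index_eq_one.mp h
    · have halt := Equiv.Perm.eq_alternatingGroup_of_index_eq_two h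
      have hmem : σ ∈ (Gal.galActionHom p ℂ).range := ⟨_, rfl⟩
      rw [halt, Equiv.Perm.mem_alternatingGroup, hswap.sign_eq] at hmem
      exact absurd hmem (by decide)
  have hbij : Function.Bijective (Gal.galActionHom p ℂ) :=
    ⟨hinj, MonoidHom.range_eq_top.mp htop⟩
  exact ⟨(MulEquiv.ofBijective _ hbij).trans (Fintype.equivFinOfCardEq hcard).permCongrHom⟩

theorem A4_two_charpoly : (A4 2).charpoly = X ^ 4 - X ^ 3 - C (2 : ℚ) * X + 1 := by
  rw [Matrix.charpoly, Matrix.charmatrix]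
  simp [A4, Matrix.det_succ_row_zero, Fin.sum_univ_succ, Fin.succAbove]
  ring

/-- The characteristic polynomial of `A₄(2)`, namely `x⁴ − x³ − 2x + 1`, is irreducible over
`ℚ` and the Galois group over `ℚ` of its splitting field is isomorphic to `S₄`. -/
theorem A4_two_Galois_group :
    (A4 2).charpoly = X ^ 4 - X ^ 3 - C (2 : ℚ) * X + 1 ∧
    Irreducible (X ^ 4 - X ^ 3 - C (2 : ℚ) * X + 1) ∧
    Nonempty ((X ^ 4 - X ^ 3 - C (2 : ℚ) * X + 1).Gal ≃* Equiv.Perm (Fin 4)) :=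
  ⟨A4_two_charpoly, quartic_irreducible, quartic_gal⟩
end

section
/- For every integer d ≥ 3, the subgroup of GL(d, ℤ) generated by the set {A_d(k) : k ∈ ℕ, k ≥ 1} contains SL(d, ℤ); that is, every d×d integer matrix of determinant 1 can be written as a finite product of the matrices A_d(k) and their inverses. -/
/-- The matrix `A_d(k)` (over `ℤ`, indices `0, …, d−1`): `A_d(k)_{0,d−2} = k`,
`A_d(k)_{0,d−1} = k−1`, subdiagonal entries `A_d(k)_{i,i−1} = 1` for `1 ≤ i ≤ d−1`,
`A_d(k)_{d−1,d−1} = 1`, and all other entries `0`. -/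
def Ad (d : ℕ) (k : ℤ) : Matrix (Fin d) (Fin d) ℤ :=
  Matrix.of fun i j =>
    if i.val = 0 then (if j.val = d - 2 then k else if j.val = d - 1 then k - 1 else 0)
    else (if i.val = j.val + 1 then 1 else 0) +
      (if i.val = d - 1 ∧ j.val = d - 1 then 1 else 0)

/-! ### Integer row reduction -/

/-- The columns of `M` with index less than `k` agree with those of the identity. -/
def ColsDone {d : ℕ} (k : ℕ) (M : Matrix (Fin d) (Fin d) ℤ) : Prop :=
  ∀ i j : Fin d, j.val < k → M i j = if i = j then 1 else 0

lemma ColsDone.row_op {d k : ℕ} {M : Matrix (Fin d) (Fin d) ℤ} (h : ColsDone k M)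
    {p q : Fin d} (hp : k ≤ p.val) (c : ℤ) :
    ColsDone k (Matrix.transvection q p c * M) := by
  intro i j hj
  by_cases hi : i = q
  · subst hi
    have hpj : p ≠ j := by rintro rfl; omega
    rw [Matrix.transvection_mul_apply_same, h _ _ hj, h _ _ hj, if_neg hpj]
    simp
  · rw [Matrix.transvection_mul_apply_of_ne _ _ _ _ hi, h _ _ hj]

lemma det_row_op {d : ℕ} {M : Matrix (Fin d) (Fin d) ℤ} (h : M.det = 1)
    {p q : Fin d} (hpq : q ≠ p) (c : ℤ) :
    (Matrix.transvection q p c * M).det = 1 := by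
  rw [Matrix.det_mul, Matrix.det_transvection_of_ne _ _ hpq, h, one_mul]

lemma clear_column {d : ℕ} {P : Matrix (Fin d) (Fin d) ℤ → Prop}
    (hP : ∀ (i j : Fin d) (c : ℤ) (M : Matrix (Fin d) (Fin d) ℤ), i ≠ j →
      P (Matrix.transvection i j c * M) → P M)
    (k : Fin d)
    (next : ∀ M : Matrix (Fin d) (Fin d) ℤ, M.det = 1 → ColsDone (k.val + 1) M → P M)
    (s : Finset (Fin d)) :
    ∀ M : Matrix (Fin d) (Fin d) ℤ, M.det = 1 → ColsDone k.val M → M k k = 1 →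
      (∀ i, i ≠ k → i ∉ s → M i k = 0) → P M := by
  induction s using Finset.induction with
  | empty =>
    intro M hM hc hk h0
    refine next M hM ?_
    intro i j hj
    rcases Nat.lt_succ_iff_lt_or_eq.mp hj with hj | hj
    · exact hc i j hj
    · have : j = k := Fin.ext hj
      subst this
      by_cases hi : i = j
      · subst hi; simp [hk]
      · simp [hi, h0 i hi]
  | insert a s _ ih =>
    intro M hM hc hk h0
    by_cases hak : a = k
    · refine ih M hM hc hk fun i hi his => h0 i hi ?_
      rw [Finset.mem_insert]
      rintro (rfl | h)
      · exact hi hak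
      · exact his h
    · refine hP a k (-(M a k)) M hak ?_
      refine ih _ (det_row_op hM hak _) (hc.row_op le_rfl _) ?_ ?_
      · rw [Matrix.transvection_mul_apply_of_ne _ _ _ _ (Ne.symm hak), hk]
      · intro i hi his
        by_cases hia : i = a
        · subst hia
          rw [Matrix.transvection_mul_apply_same, hk]; ring
        · rw [Matrix.transvection_mul_apply_of_ne _ _ _ _ hia]
          exact h0 i hi (by simp [hia, his])

lemma single_entry_unit {d : ℕ} {M : Matrix (Fin d) (Fin d) ℤ} (hM : M.det = 1) {k p : Fin d}
    (hc : ColsDone k.val M) (h0 : ∀ i : Fin d, k.val ≤ i.val → i ≠ p → M i k = 0)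
    (hp : k.val ≤ p.val) : M p k * M p k = 1 := by
  have hN : M⁻¹ * M = 1 := Matrix.nonsing_inv_mul M (by rw [hM]; exact isUnit_one)
  have hz : ∀ j : Fin d, j.val < k.val → M⁻¹ k j = 0 := by
    intro j hj
    have h1 := congrFun (congrFun hN k) j
    rw [Matrix.mul_apply] at h1
    have hkj : k ≠ j := by rintro rfl; omega
    simpa [hc _ _ hj, Matrix.one_apply, hkj] using h1
  have h1 := congrFun (congrFun hN k) k
  rw [Matrix.mul_apply, Finset.sum_eq_single p] at h1
  · rw [Matrix.one_apply_eq] at h1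
    have hu : IsUnit (M p k) := IsUnit.of_mul_eq_one (M⁻¹ k p) (by rw [mul_comm]; exact h1)
    rcases Int.isUnit_iff.mp hu with h | h <;> simp [h]
  · intro i _ hi
    by_cases hik : i.val < k.val
    · rw [hz i hik, zero_mul]
    · rw [h0 i (by omega) hi, mul_zero]
  · simp

lemma column_step {d : ℕ} {P : Matrix (Fin d) (Fin d) ℤ → Prop}
    (hP : ∀ (i j : Fin d) (c : ℤ) (M : Matrix (Fin d) (Fin d) ℤ), i ≠ j →
      P (Matrix.transvection i j c * M) → P M)
    (k : Fin d)
    (next : ∀ M : Matrix (Fin d) (Fin d) ℤ, M.det = 1 → ColsDone (k.val + 1) M → P M)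
    (N : ℕ) :
    ∀ M : Matrix (Fin d) (Fin d) ℤ, M.det = 1 → ColsDone k.val M →
      (∑ i ∈ Finset.univ.filter (fun i : Fin d => k.val ≤ i.val), (M i k).natAbs) = N → P M := by
  have done : ∀ M : Matrix (Fin d) (Fin d) ℤ, M.det = 1 → ColsDone k.val M → M k k = 1 → P M :=
    fun M h1 h2 h3 => clear_column hP k next Finset.univ M h1 h2 h3 (by simp)
  induction N using Nat.strong_induction_on with
  | _ N ih =>
  intro M hM hc hN
  by_cases hex : ∃ p q : Fin d, p ≠ q ∧ k.val ≤ p.val ∧ k.val ≤ q.val ∧ M p k ≠ 0 ∧ M q k ≠ 0 ∧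
      (M p k).natAbs ≤ (M q k).natAbs
  · obtain ⟨p, q, hpq, hp, hq, hpz, hqz, hle⟩ := hex
    obtain ⟨c, hlt⟩ : ∃ c : ℤ, (M q k + c * M p k).natAbs < (M q k).natAbs := by
      rcases lt_or_gt_of_ne hpz with h1 | h1 <;> rcases lt_or_gt_of_ne hqz with h2 | h2
      · exact ⟨-1, by omega⟩
      · exact ⟨1, by omega⟩
      · exact ⟨1, by omega⟩
      · exact ⟨-1, by omega⟩
    refine hP q p c M hpq.symm ?_
    refine ih _ ?_ _ (det_row_op hM hpq.symm _) (hc.row_op hp _) rfl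
    rw [← hN]
    refine Finset.sum_lt_sum ?_ ⟨q, by simpa using hq, ?_⟩
    · intro i _
      by_cases hi : i = q
      · subst hi; rw [Matrix.transvection_mul_apply_same]; exact hlt.le
      · rw [Matrix.transvection_mul_apply_of_ne _ _ _ _ hi]
    · rw [Matrix.transvection_mul_apply_same]; exact hlt
  · obtain ⟨p, hp, h0⟩ : ∃ p : Fin d, k.val ≤ p.val ∧
        ∀ i : Fin d, k.val ≤ i.val → i ≠ p → M i k = 0 := by
      by_cases hz : ∃ p : Fin d, k.val ≤ p.val ∧ M p k ≠ 0
      · obtain ⟨p, hp, hpz⟩ := hz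
        refine ⟨p, hp, fun i hi hip => ?_⟩
        by_contra hiz
        rcases le_total (M p k).natAbs (M i k).natAbs with h | h
        · exact hex ⟨p, i, hip.symm, hp, hi, hpz, hiz, h⟩
        · exact hex ⟨i, p, hip, hi, hp, hiz, hpz, h⟩
      · push Not at hz
        exact ⟨k, le_rfl, fun i hi _ => hz i hi⟩
    have hu := single_entry_unit hM hc h0 hp
    by_cases hpk : p = k
    · subst hpk
      by_cases hlast : p.val + 1 < d
      · have hq : (⟨p.val + 1, hlast⟩ : Fin d) ≠ p := by
          intro h; have := congrArg Fin.val h; simp at this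
        generalize hqdef : (⟨p.val + 1, hlast⟩ : Fin d) = q at hq
        have hpq : p.val ≤ q.val := by rw [← hqdef]; simp
        refine hP q p (M p p) M hq ?_
        refine hP p q (1 - M p p) _ hq.symm ?_
        refine done _ (det_row_op (det_row_op hM hq _) hq.symm _)
          ((hc.row_op le_rfl _).row_op hpq _) ?_
        rw [Matrix.transvection_mul_apply_same, Matrix.transvection_mul_apply_same,
          Matrix.transvection_mul_apply_of_ne _ _ _ _ hq.symm, h0 q hpq hq, hu]
        ring
      · refine done M hM hc ?_
        have htri : M.IsUpperTriangular := by
          intro i j hij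
          have hij' : j.val < i.val := hij
          rw [hc i j (by omega), if_neg (by rintro rfl; omega)]
        rw [Matrix.det_of_isUpperTriangular htri, Finset.prod_eq_single p] at hM
        · exact hM
        · intro i _ hi
          have : i.val ≠ p.val := fun h => hi (Fin.ext h)
          rw [hc i i (by omega), if_pos rfl]
        · simp
    · refine hP k p (M p k) M (Ne.symm hpk) ?_
      refine done _ (det_row_op hM (Ne.symm hpk) _) (hc.row_op hp _) ?_
      rw [Matrix.transvection_mul_apply_same, h0 k le_rfl (Ne.symm hpk), hu, zero_add]

theorem row_reduction {d : ℕ} {P : Matrix (Fin d) (Fin d) ℤ → Prop} (h1 : P 1)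
    (hP : ∀ (i j : Fin d) (c : ℤ) (M : Matrix (Fin d) (Fin d) ℤ), i ≠ j →
      P (Matrix.transvection i j c * M) → P M)
    (M : Matrix (Fin d) (Fin d) ℤ) (hM : M.det = 1) : P M := by
  have key : ∀ n k : ℕ, k + n = d → ∀ M : Matrix (Fin d) (Fin d) ℤ, M.det = 1 →
      ColsDone k M → P M := by
    intro n
    induction n with
    | zero =>
      intro k hk M _ hc
      have : M = 1 := by
        ext i j
        rw [hc i j (by omega), Matrix.one_apply]
      rw [this]; exact h1
    | succ n ih =>
      intro k hk M hM hc
      exact column_step hP ⟨k, by omega⟩ (ih (k + 1) (by omega)) _ M hM hc rfl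
  exact key d 0 (by omega) M hM (fun i j hj => by omega)

/-! ### Elementary matrices in the subgroup -/

section ringlemmas

variable {R : Type*} [Ring R] {G : Subgroup Rˣ}

/-- The ring element `a` is (the value of) a unit lying in `G`. -/
def InG (G : Subgroup Rˣ) (a : R) : Prop := ∃ g ∈ G, (g : R) = a

lemma InG.one : InG G (1 : R) := ⟨1, G.one_mem, rfl⟩

lemma InG.mul {a b : R} (ha : InG G a) (hb : InG G b) : InG G (a * b) := by
  obtain ⟨g, hg, rfl⟩ := ha
  obtain ⟨h, hh, rfl⟩ := hb
  exact ⟨g * h, G.mul_mem hg hh, rfl⟩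

lemma InG.inv {a b : R} (ha : InG G a) (hab : a * b = 1) : InG G b := by
  obtain ⟨g, hg, rfl⟩ := ha
  exact ⟨g⁻¹, G.inv_mem hg, Units.inv_eq_of_mul_eq_one_right hab⟩

lemma InG.conj {a b c : R} (ha : InG G a) (hb : InG G b) (h : a * b = c * a) : InG G c := by
  obtain ⟨g, hg, rfl⟩ := ha
  obtain ⟨u, hu, rfl⟩ := hb
  refine ⟨g * u * g⁻¹, G.mul_mem (G.mul_mem hg hu) (G.inv_mem hg), ?_⟩
  rw [Units.val_mul, Units.val_mul, h, mul_assoc, Units.mul_inv, mul_one]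

lemma InG.conj' {a x y : R} (ha : InG G a) (hb : InG G (1 + x)) (h : a * x = y * a) :
    InG G (1 + y) :=
  ha.conj hb (by rw [mul_add, add_mul, h, mul_one, one_mul])

lemma InG.neg {x : R} (hx : InG G (1 + x)) (h : x * x = 0) : InG G (1 - x) :=
  hx.inv (by
    have : (1 + x) * (1 - x) = 1 - x * x := by noncomm_ring
    rw [this, h, sub_zero])

lemma InG.comm {x y : R} (hx : InG G (1 + x)) (hy : InG G (1 + y)) (hxx : x * x = 0)
    (hyy : y * y = 0) (hyx : y * x = 0) : InG G (1 + x * y) := by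
  have h := ((hx.mul hy).mul (hx.neg hxx)).mul (hy.neg hyy)
  have e : (1 + x) * (1 + y) * (1 - x) * (1 - y) = 1 + x * y - x * x - y * x - y * y
      + (x * x) * y + (y * x) * y - x * (y * x) - x * (y * y) + x * (y * x) * y := by
    noncomm_ring
  rw [e, hxx, hyy, hyx] at h
  simpa using h

lemma InG.zmul {x : R} (hx : InG G (1 + x)) (h : x * x = 0) (c : ℤ) : InG G (1 + c • x) := by
  induction c using Int.induction_on with
  | zero => simpa using InG.one
  | succ n ih =>
    have e : (1 + ((n : ℤ) + 1) • x) = (1 + (n : ℤ) • x) * (1 + x) := by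
      rw [add_mul, mul_add, smul_mul_assoc, mul_add, h, add_smul]
      simp only [mul_one, one_mul, one_smul, add_zero]
      abel
    rw [e]; exact ih.mul hx
  | pred n ih =>
    have e : (1 + (-(n : ℤ) - 1) • x) = (1 + (-(n : ℤ)) • x) * (1 - x) := by
      rw [add_mul, mul_sub, smul_mul_assoc, mul_sub, h, sub_smul]
      simp only [mul_one, one_mul, one_smul, sub_zero]
      abel
    rw [e]; exact ih.mul (hx.neg h)

end ringlemmas

lemma single_mul_entry {d : ℕ} (a b : Fin d) (M : Matrix (Fin d) (Fin d) ℤ) (i j : Fin d) :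
    (Matrix.single a b (1 : ℤ) * M) i j = if i = a then M b j else 0 := by
  by_cases h : i = a
  · subst h; simp
  · simp [h]

lemma mul_single_entry {d : ℕ} (a b : Fin d) (M : Matrix (Fin d) (Fin d) ℤ) (i j : Fin d) :
    (M * Matrix.single a b (1 : ℤ)) i j = if j = b then M i a else 0 := by
  by_cases h : j = b
  · subst h; simp
  · simp [h]

/-- The inverse of `Ad d k`. -/
def AdInv (d : ℕ) (k : ℤ) : Matrix (Fin d) (Fin d) ℤ :=
  Matrix.of fun l j =>
    if j.val = 0 then (if l.val = d - 2 then 1 else if l.val = d - 1 then -1 else 0)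
    else if j.val = d - 1 then (if l.val = d - 2 then 1 - k else if l.val = d - 1 then k else 0)
    else if j.val = l.val + 1 then 1 else 0

lemma AdInv_mul (d : ℕ) (hd : 3 ≤ d) (k : ℤ) : Ad d k * AdInv d k = 1 := by
  ext i j
  rw [Matrix.mul_apply]
  by_cases hi : i.val = 0
  · have e : ∀ l : Fin d, Ad d k i l * AdInv d k l j =
        (if l = (⟨d - 2, by omega⟩ : Fin d) then k * AdInv d k l j else 0) +
        (if l = (⟨d - 1, by omega⟩ : Fin d) then (k - 1) * AdInv d k l j else 0) := by
      intro l
      simp only [Ad, Matrix.of_apply, Fin.ext_iff, hi, if_true]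
      split_ifs <;> first | omega | ring
    simp only [e, Finset.sum_add_distrib, Finset.sum_ite_eq', Finset.mem_univ, if_true]
    simp only [AdInv, Matrix.of_apply, Matrix.one_apply, Fin.ext_iff]
    split_ifs <;> first | omega | ring
  · have e : ∀ l : Fin d, Ad d k i l * AdInv d k l j =
        (if l = (⟨i.val - 1, by omega⟩ : Fin d) then AdInv d k l j else 0) +
        (if l = (⟨d - 1, by omega⟩ : Fin d) then
          (if i.val = d - 1 then AdInv d k l j else 0) else 0) := by
      intro l
      simp only [Ad, Matrix.of_apply, Fin.ext_iff, hi, if_false]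
      split_ifs <;> first | omega | ring
    simp only [e, Finset.sum_add_distrib, Finset.sum_ite_eq', Finset.mem_univ, if_true]
    simp only [AdInv, Matrix.of_apply, Matrix.one_apply, Fin.ext_iff]
    split_ifs <;> first | omega | ring

/-- The elementary matrix units, indexed by natural numbers. -/
def EE (d : ℕ) (a b : ℕ) (ha : a < d) (hb : b < d) : Matrix (Fin d) (Fin d) ℤ :=
  Matrix.single ⟨a, ha⟩ ⟨b, hb⟩ 1

lemma EE_mul_same {d a b c : ℕ} (ha : a < d) (hb : b < d) (hc : c < d) :
    EE d a b ha hb * EE d b c hb hc = EE d a c ha hc := by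
  simp [EE]

lemma EE_mul_ne {d a b c e : ℕ} (ha : a < d) (hb : b < d) (hc : c < d) (he : e < d) (h : b ≠ c) :
    EE d a b ha hb * EE d c e hc he = 0 := by
  unfold EE
  rw [Matrix.single_mul_single_of_ne]
  simpa using h

lemma EE_mul_entry {d a b : ℕ} (ha : a < d) (hb : b < d) (M : Matrix (Fin d) (Fin d) ℤ)
    (i j : Fin d) : (EE d a b ha hb * M) i j = if i.val = a then M ⟨b, hb⟩ j else 0 := by
  rw [EE, single_mul_entry]; simp only [Fin.ext_iff]

lemma mul_EE_entry {d a b : ℕ} (ha : a < d) (hb : b < d) (M : Matrix (Fin d) (Fin d) ℤ)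
    (i j : Fin d) : (M * EE d a b ha hb) i j = if j.val = b then M i ⟨a, ha⟩ else 0 := by
  rw [EE, mul_single_entry]; simp only [Fin.ext_iff]

lemma Ad_two (d : ℕ) (hd : 3 ≤ d) :
    Ad d 2 = (1 + EE d 0 (d - 1) (by omega) (by omega)) * Ad d 1 := by
  ext i j
  rw [add_mul, one_mul, Matrix.add_apply, EE_mul_entry]
  simp only [Ad, Matrix.of_apply]
  split_ifs <;> first | omega | tauto

lemma Ad_conj_corner (d : ℕ) (hd : 3 ≤ d) :
    Ad d 1 * EE d 0 (d - 1) (by omega) (by omega) =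
      (EE d 1 (d - 1) (by omega) (by omega) - EE d 1 0 (by omega) (by omega)) * Ad d 1 := by
  ext i j
  rw [sub_mul, Matrix.sub_apply, EE_mul_entry, EE_mul_entry, mul_EE_entry]
  simp only [Ad, Matrix.of_apply]
  split_ifs <;> first | omega | tauto

lemma Ad_conj_sub (d j : ℕ) (hj : j + 3 < d) :
    Ad d 1 * EE d (j + 1) j (by omega) (by omega) =
      EE d (j + 2) (j + 1) (by omega) (by omega) * Ad d 1 := by
  ext i l
  rw [EE_mul_entry, mul_EE_entry]
  simp only [Ad, Matrix.of_apply]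
  split_ifs <;> first | omega | tauto

lemma Ad_conj_last (d : ℕ) (hd : 3 ≤ d) :
    Ad d 1 * EE d (d - 2) (d - 3) (by omega) (by omega) =
      (EE d 0 (d - 2) (by omega) (by omega) + EE d (d - 1) (d - 2) (by omega) (by omega)) *
        Ad d 1 := by
  ext i l
  rw [add_mul, Matrix.add_apply, EE_mul_entry, EE_mul_entry, mul_EE_entry]
  simp only [Ad, Matrix.of_apply]
  split_ifs <;> first | omega | tauto

lemma EE_all (d : ℕ) (hd : 3 ≤ d) (G : Subgroup (Matrix (Fin d) (Fin d) ℤ)ˣ)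
    (h1 : InG G (Ad d 1)) (h2 : InG G (Ad d 2)) (a b : ℕ) (ha : a < d) (hb : b < d)
    (hab : a ≠ b) : InG G (1 + EE d a b ha hb) := by
  have z : (0 : ℕ) < d := by omega
  have o : (1 : ℕ) < d := by omega
  have m : d - 2 < d := by omega
  have n : d - 1 < d := by omega
  have comm : ∀ {a b c : ℕ} {ha : a < d} {hb : b < d} {hc : c < d}, a ≠ b → b ≠ c → a ≠ c →
      InG G (1 + EE d a b ha hb) → InG G (1 + EE d b c hb hc) → InG G (1 + EE d a c ha hc) := by
    intro a b c ha hb hc hab hbc hac h h'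
    have := h.comm h' (EE_mul_ne _ _ _ _ hab.symm) (EE_mul_ne _ _ _ _ hbc.symm)
      (EE_mul_ne _ _ _ _ hac.symm)
    rwa [EE_mul_same] at this
  -- the corner
  have c0 : InG G (1 + EE d 0 (d - 1) z n) := by
    obtain ⟨g, hg, hg'⟩ := h1
    obtain ⟨u, hu, hu'⟩ := h2
    refine ⟨u * g⁻¹, G.mul_mem hu (G.inv_mem hg), ?_⟩
    rw [Units.val_mul, hu', Ad_two d hd, ← hg', mul_assoc, Units.mul_inv, mul_one]
  have c1 := h1.conj' c0 (Ad_conj_corner d hd)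
  have z01 : (d - 1 : ℕ) ≠ 1 := by omega
  have z02 : (d - 1 : ℕ) ≠ 0 := by omega
  have z03 : (d - 2 : ℕ) ≠ 0 := by omega
  have z04 : (d - 2 : ℕ) ≠ d - 1 := by omega
  have e1 : InG G (1 + EE d 1 (d - 1) o n) := by
    have h := c1.comm c0
      (by simp [sub_mul, mul_sub, EE_mul_ne, z01])
      (EE_mul_ne _ _ _ _ z02)
      (by rw [mul_sub, EE_mul_ne _ _ _ _ z01, EE_mul_ne _ _ _ _ z01, sub_zero])
    rw [sub_mul, EE_mul_ne _ _ _ _ z02, EE_mul_same, zero_sub] at h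
    simpa using h.neg (by simp [EE_mul_ne, z01])
  have e10 : InG G (1 + EE d 1 0 o z) := by
    have h := c1.mul (e1.neg (EE_mul_ne _ _ _ _ z01))
    have e : (1 + (EE d 1 (d - 1) o n - EE d 1 0 o z)) * (1 - EE d 1 (d - 1) o n)
        = 1 + (- EE d 1 0 o z) := by
      simp only [add_mul, sub_mul, mul_sub, one_mul, mul_one, EE_mul_ne _ _ _ _ z01,
        EE_mul_ne _ _ _ _ zero_ne_one]
      abel
    rw [e] at h
    simpa using h.neg (by simp [EE_mul_ne])
  have sub : ∀ j (hj : j + 2 < d), InG G (1 + EE d (j + 1) j (by omega) (by omega)) := by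
    intro j
    induction j with
    | zero => intro _; exact e10
    | succ j ih => intro hj; exact h1.conj' (ih (by omega)) (Ad_conj_sub d j (by omega))
  have last : InG G (1 + EE d (d - 1) (d - 2) n m) := by
    have h : InG G (1 + EE d (d - 2) (d - 3) m (by omega)) := by
      have := sub (d - 3) (by omega)
      have e : d - 3 + 1 = d - 2 := by omega
      convert this using 2; simp only [EE, e]
    have hz := h1.conj' h (Ad_conj_last d hd)
    have hx := c0.comm hz (EE_mul_ne _ _ _ _ z02)
      (by simp [add_mul, mul_add, EE_mul_ne, z03, z04])
      (by simp [add_mul, EE_mul_ne, z03])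
    rw [mul_add, EE_mul_ne _ _ _ _ z02, EE_mul_same, zero_add] at hx
    have h' := hz.mul (hx.neg (EE_mul_ne _ _ _ _ z03))
    have e : (1 + (EE d 0 (d - 2) z m + EE d (d - 1) (d - 2) n m)) * (1 - EE d 0 (d - 2) z m)
        = 1 + EE d (d - 1) (d - 2) n m := by
      simp only [add_mul, mul_sub, one_mul, mul_one, EE_mul_ne _ _ _ _ z03]
      abel
    rwa [e] at h'
  have sub' : ∀ j (hj : j + 1 < d), InG G (1 + EE d (j + 1) j hj (by omega)) := by
    intro j hj
    by_cases h : j + 2 < d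
    · exact sub j h
    · have e : j = d - 2 := by omega
      have e' : d - 2 + 1 = d - 1 := by omega
      subst e
      convert last using 2; simp only [EE, e']
  have low : ∀ t a (h : a + t + 1 < d), InG G (1 + EE d (a + t + 1) a h (by omega)) := by
    intro t
    induction t with
    | zero => intro a h; exact sub' a h
    | succ t ih =>
      intro a h
      exact comm (b := a + t + 1) (hb := by omega) (by omega) (by omega) (by omega)
        (sub' (a + t + 1) h) (ih a (by omega))
  have low' : ∀ a b (ha : a < d) (hb : b < d), b < a → InG G (1 + EE d a b ha hb) := by
    intro a b ha hb h
    obtain ⟨t, rfl⟩ := Nat.exists_eq_add_of_lt h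
    exact low t b ha
  have top : ∀ b (hb : b < d), 0 < b → InG G (1 + EE d 0 b z hb) := by
    intro b hb h
    by_cases hbn : b = d - 1
    · subst hbn; exact c0
    · exact comm (by omega) (by omega) (by omega) c0 (low' (d - 1) b n hb (by omega))
  rcases lt_or_gt_of_ne hab with h | h
  · by_cases h0 : a = 0
    · subst h0; exact top b hb h
    · exact comm h0 (by omega) hab (low' a 0 ha z (by omega)) (top b hb (by omega))
  · exact low' a b ha hb h

/-- For every `d ≥ 3`, the subgroup of `GL(d, ℤ)` generated by the matrices `A_d(k)`,
`k ≥ 1`, contains `SL(d, ℤ)`: every `d×d` integer matrix of determinant `1` is a finite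
product of the matrices `A_d(k)` and their inverses. -/
theorem Ad_generate_SL (d : ℕ) (hd : 3 ≤ d) (M : Matrix (Fin d) (Fin d) ℤ)
    (hM : M.det = 1) :
    ∃ g ∈ Subgroup.closure
        {u : (Matrix (Fin d) (Fin d) ℤ)ˣ | ∃ k : ℤ, 1 ≤ k ∧ (u : Matrix (Fin d) (Fin d) ℤ) = Ad d k},
      (g : Matrix (Fin d) (Fin d) ℤ) = M := by
  set G := Subgroup.closure
    {u : (Matrix (Fin d) (Fin d) ℤ)ˣ | ∃ k : ℤ, 1 ≤ k ∧ (u : Matrix (Fin d) (Fin d) ℤ) = Ad d k}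
    with hG
  have hA : ∀ k : ℤ, 1 ≤ k → InG G (Ad d k) := fun k hk =>
    ⟨⟨Ad d k, AdInv d k, AdInv_mul d hd k, mul_eq_one_comm.mp (AdInv_mul d hd k)⟩,
      Subgroup.subset_closure ⟨k, hk, rfl⟩, rfl⟩
  have hT : ∀ (i j : Fin d) (c : ℤ), i ≠ j → InG G (Matrix.transvection i j c) := by
    intro i j c hij
    have hv : i.val ≠ j.val := fun h => hij (Fin.ext h)
    have h := (EE_all d hd G (hA 1 le_rfl) (hA 2 (by norm_num)) i j i.2 j.2 hv).zmul
      (EE_mul_ne _ _ _ _ hv.symm) c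
    simpa [EE, Matrix.transvection, Matrix.smul_single] using h
  refine row_reduction (P := InG G) InG.one ?_ M hM
  intro i j c M hij h
  have e : M = Matrix.transvection i j (-c) * (Matrix.transvection i j c * M) := by
    rw [← mul_assoc, Matrix.transvection_mul_transvection_same _ _ hij, neg_add_cancel,
      Matrix.transvection_zero, one_mul]
  rw [e]
  exact (hT i j (-c) hij).mul h
end
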